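/- Let γ : ℝ → [0,∞] be a measurable, symmetric, locally integrable function with Γ_t := 2∫₀ᵗ γ(s) ds, and let μ be a tempered Borel measure on ℝ^d whose Fourier transform in the Parseval sense is a locally integrable function f : ℝ^d → [0,∞] with f(x) < ∞ for every x ≠ 0, and such that ∫_{|ξ|>1} |ξ|^{-2} μ(dξ) < ∞. For t > 0 and n ≥ 1 let α_n(t) be defined as in the hyperbolic Anderson model chaos expansion (the explicit 2n-fold time integral against ∏_j γ(t_j − s_j) of the product of two wave-kernel factors Φ_n, integrated against μ^{⊗n}). Then for every N > 0, α_n(t) ≤ Γ_t^n · n! · (2π)^{-nd} · 8^n · ∑_{k=0}^{n} (t^{n+2k}/k!) · D_N^k · C_N^{n−k}, where C_N := ∫_{|ξ|>N} |ξ|^{-2} μ(dξ) and D_N := μ({ξ : |ξ| ≤ N}). -/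

import Mathlib

open MeasureTheory Real
open scoped ENNReal RealInnerProductSpace

noncomputable section

/-- Euclidean space `ℝ^d`. -/
abbrev Ed (d : ℕ) := EuclideanSpace ℝ (Fin d)

/-- Fourier transform on `ℝ^d`: `ℱφ(ξ) = ∫ e^{-i ξ·x} φ(x) dx`. -/
def FTd (d : ℕ) (φ : Ed d → ℂ) (ξ : Ed d) : ℂ :=
  ∫ x : Ed d, Complex.exp (-(Complex.I * ((⟪ξ, x⟫ : ℝ) : ℂ))) * φ x

/-- A Borel measure on `ℝ^d` is tempered if `∫ (1+|ξ|²)^{-k} dμ < ∞` for some `k ∈ ℕ`. -/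
def IsTempered (d : ℕ) (μ : Measure (Ed d)) : Prop :=
  ∃ k : ℕ, ∫⁻ ξ, ENNReal.ofReal ((1 + ‖ξ‖ ^ 2) ^ (-(k : ℝ))) ∂μ < ⊤

/-- Local integrability for `[0,∞]`-valued functions on `ℝ^d`. -/
def LocIntENN (d : ℕ) (g : Ed d → ℝ≥0∞) : Prop :=
  ∀ s : Set (Ed d), IsCompact s → ∫⁻ x in s, g x < ⊤

/-- `g` is the Fourier transform of `μ` in the Parseval sense:
`∫ φ(x) g(x) dx = (2π)^{-d} ∫ ℱφ(ξ) μ(dξ)` for every Schwartz function `φ` on `ℝ^d`. -/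
def ParsevalFT (d : ℕ) (g : Ed d → ℝ≥0∞) (μ : Measure (Ed d)) : Prop :=
  ∀ φ : SchwartzMap (Ed d) ℂ,
    ∫ x, φ x * (((g x).toReal : ℝ) : ℂ) =
      (((2 * π) ^ d : ℝ)⁻¹ : ℂ) * ∫ ξ, FTd d (fun y => φ y) ξ ∂μ

/-- `sinc a r = sin(a r)/r`, interpreted as `a` when `r = 0`. -/
def sinc (a r : ℝ) : ℝ := if r = 0 then a else Real.sin (a * r) / r

/-- Local integrability for `[0,∞]`-valued functions on `ℝ`. -/
def LocIntENN1 (g : ℝ → ℝ≥0∞) : Prop :=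
  ∀ s : Set ℝ, IsCompact s → ∫⁻ x in s, g x < ⊤

/-- The box `[0,t]^n`. -/
def TBox (n : ℕ) (t : ℝ) : Set (Fin n → ℝ) :=
  Set.univ.pi fun _ : Fin n => Set.Icc (0 : ℝ) t

/-- The wave-kernel factor `Φ_n(t; t₁,…,t_n; ξ₁,…,ξ_n)`: with `ρ` the sorting permutation
of `(t₁,…,t_n)` (so that `t_{ρ(1)} ≤ … ≤ t_{ρ(n)}`, and `t_{ρ(n+1)} := t`),
`Φ_n = ∏_{j=1}^n sin((t_{ρ(j+1)} − t_{ρ(j)}) |ξ_{ρ(1)}+…+ξ_{ρ(j)}|)/|ξ_{ρ(1)}+…+ξ_{ρ(j)}|`,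
where `sin(a r)/r` is interpreted as `a` when `r = 0`. -/
def Phi (d n : ℕ) (t : ℝ) (ts : Fin n → ℝ) (ξ : Fin n → Ed d) : ℝ :=
  ∏ j : Fin n,
    sinc ((if hj : (j : ℕ) + 1 < n then ts (Tuple.sort ts ⟨(j : ℕ) + 1, hj⟩) else t)
        - ts (Tuple.sort ts j))
      ‖∑ i ∈ Finset.Iic j, ξ (Tuple.sort ts i)‖

/-- The `n`-th chaos coefficient `α_n(t)` of the hyperbolic Anderson model:
`α_n(t) = (2π)^{-nd} ∫_{ℝ^{nd}} ∫_{[0,t]^n} ∫_{[0,t]^n} ∏_j γ(t_j−s_j) ·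
Φ_n(t;𝐭;ξ) Φ_n(t;𝐬;ξ) d𝐭 d𝐬 μ(dξ₁)…μ(dξ_n)`. -/
def alphaHAM (d n : ℕ) (γ : ℝ → ℝ≥0∞) (μ : Measure (Ed d)) (t : ℝ) : ℝ :=
  ((2 * π) ^ (n * d))⁻¹ *
    ∫ ξ : Fin n → Ed d,
      (∫ ts in TBox n t, ∫ ss in TBox n t,
        (∏ j : Fin n, (γ (ts j - ss j)).toReal) * (Phi d n t ts ξ * Phi d n t ss ξ))
    ∂(Measure.pi fun _ : Fin n => μ)

/-!
Write `Γ = Γ_t`, `D = D_N`, `C = C_N`. The bound rests on a uniform estimate of the frequency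
integral for fixed times, so no integration over the time simplex is needed.

* Each time lag in `Φ_n` is at most `t`, so `Φ_n(t; 𝐭; ξ)²` is at most
  `∏_j g(ξ_{ρ(1)} + … + ξ_{ρ(j)})` with the resolvent kernel `g(ξ) = 2t²/(1 + t²|ξ|²)`
  (`sinc_sq_le`, `Phi_sq_le`).
* `g` satisfies a maximum principle: `∫ g(ξ + η) μ(dξ) ≤ ∫ g dμ` for every `η` (`gk_shift`).
  Indeed `g` is a positive mixture of Gaussians, and for a Gaussian the Parseval identity expresses
  the left side as the integral of a nonnegative function against `e^{-iη·x}` (`gauss_shift`).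
  This is valid in every dimension, unlike an argument with the wave kernel itself, whose
  fundamental solution is a nonnegative measure only for `d ≤ 3`.
* Integrating the variables one after another (`chain_bound`, `Gk_bound`) gives
  `∫ Φ_n² dμ^{⊗n} ≤ (∫ g dμ)^n ≤ (2(t²D + C))^n`, where the last step splits at `|ξ| = N`
  (`gk_total`).
* In `α_n(t)`, the bound `|Φ(𝐭)Φ(𝐬)| ≤ (Φ(𝐭)² + Φ(𝐬)²)/2` and the fact that `γ` integrates to at
  most `Γ` over each window `[a - t, a]`, `a ∈ [0,t]`, leave `Γ^n` times the integral over
  the box of the previous estimate (`time_bound`, `alpha_enorm_bound`). Hence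
  `α_n(t) ≤ (2π)^{-nd} Γ^n t^n (2(t²D + C))^n`.
* Expanding the binomial, `C(n,k) ≤ 2^n` and `n!/k! ≥ 1` give the claim (`final_ineq`).
-/

/-! ### Gaussian Schwartz functions -/

lemma pow_mul_exp_bound (c : ℝ) (hc : 0 < c) (p : ℕ) :
    ∃ K : ℝ, 0 ≤ K ∧ ∀ u : ℝ, 0 ≤ u → (1 + u) ^ p * Real.exp (-c * u) ≤ K := by
  refine ⟨p.factorial * Real.exp c / c ^ p, by positivity, fun u hu => ?_⟩
  have h := Real.pow_div_factorial_le_exp (c * (1 + u)) (by positivity) p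
  rw [div_le_iff₀ (by positivity), mul_pow] at h
  rw [le_div_iff₀ (by positivity)]
  have e : Real.exp (c * (1 + u)) * Real.exp (-c * u) = Real.exp c := by
    rw [← Real.exp_add]; ring_nf
  calc (1 + u) ^ p * Real.exp (-c * u) * c ^ p
      = (c ^ p * (1 + u) ^ p) * Real.exp (-c * u) := by ring
    _ ≤ (Real.exp (c * (1 + u)) * p.factorial) * Real.exp (-c * u) := by gcongr
    _ = p.factorial * (Real.exp (c * (1 + u)) * Real.exp (-c * u)) := by ring
    _ = _ := by rw [e]

/-- The real iterated derivatives of `exp` on `ℂ` all have the norm of `exp` itself. -/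
lemma norm_iteratedFDeriv_cexp (n : ℕ) (z : ℂ) :
    ‖iteratedFDeriv ℝ n Complex.exp z‖ = ‖Complex.exp z‖ := by
  induction n with
  | zero => simp
  | succ n ih =>
    rw [← norm_iteratedFDeriv_fderiv]
    have : fderiv ℝ Complex.exp = (ContinuousLinearMap.mulₗᵢ ℝ ℂ) ∘ Complex.exp := by
      funext w
      have h := ((Complex.hasDerivAt_exp w).hasFDerivAt.restrictScalars ℝ).fderiv
      rw [h]
      ext x
      simp [mul_comm]
    rw [this, LinearIsometry.norm_iteratedFDeriv_comp_left, ih]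
    · exact (Complex.contDiff_exp (n := n)).contDiffAt
    · exact le_rfl

lemma phase_temperate (d : ℕ) (b : ℝ) (η : Ed d) :
    Function.HasTemperateGrowth fun x : Ed d =>
      -(b : ℂ) * ((‖x‖ : ℝ) : ℂ) ^ 2 + (-Complex.I) * ((⟪η, x⟫ : ℝ) : ℂ) := by
  have h1 : Function.HasTemperateGrowth fun x : Ed d => ((‖x‖ ^ 2 : ℝ) : ℂ) :=
    Function.HasTemperateGrowth.comp Function.Complex.hasTemperateGrowth_ofReal (Function.hasTemperateGrowth_norm_sq (Ed d))
  have h2 : Function.HasTemperateGrowth fun x : Ed d => ((⟪η, x⟫ : ℝ) : ℂ) :=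
    Function.HasTemperateGrowth.comp Function.Complex.hasTemperateGrowth_ofReal (Function.hasTemperateGrowth_inner_right η)
  have := ((Function.HasTemperateGrowth.const (-(b : ℂ))).mul h1).add
    ((Function.HasTemperateGrowth.const (-Complex.I)).mul h2)
  refine cast (congrArg _ ?_) this
  funext x
  simp

lemma norm_gauss (d : ℕ) (b : ℝ) (η x : Ed d) :
    ‖Complex.exp (-(b : ℂ) * ((‖x‖ : ℝ) : ℂ) ^ 2 + (-Complex.I) * ((⟪η, x⟫ : ℝ) : ℂ))‖ =
      Real.exp (-b * ‖x‖ ^ 2) := by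
  rw [Complex.norm_exp]
  congr 1
  simp [← Complex.ofReal_pow]

/-- The modulated Gaussian `x ↦ e^{-b|x|² - i η·x}` as a Schwartz function. By Faà di Bruno, its
derivatives are the Gaussian times factors of polynomial growth. -/
def gaussS (d : ℕ) (b : ℝ) (hb : 0 < b) (η : Ed d) : SchwartzMap (Ed d) ℂ where
  toFun x := Complex.exp (-(b : ℂ) * ((‖x‖ : ℝ) : ℂ) ^ 2 + (-Complex.I) * ((⟪η, x⟫ : ℝ) : ℂ))
  smooth' := Complex.contDiff_exp.comp (phase_temperate d b η).1
  decay' := by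
    intro k n
    obtain ⟨m, C, hC, hD⟩ := (phase_temperate d b η).norm_iteratedFDeriv_le_uniform n
    obtain ⟨K, hK, hKb⟩ := pow_mul_exp_bound b hb (k + m * n)
    refine ⟨n.factorial * (1 + C) ^ n * 2 ^ (k + m * n) * K, fun x => ?_⟩
    have key := norm_iteratedFDeriv_comp_le (𝕜 := ℝ) (g := Complex.exp) (n := n) (N := n)
      (Complex.contDiff_exp) ((phase_temperate d b η).1.of_le (by exact_mod_cast le_top)) le_rfl x
      (C := Real.exp (-b * ‖x‖ ^ 2)) (D := (1 + C) * (1 + ‖x‖) ^ m)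
      (fun i _ => by rw [norm_iteratedFDeriv_cexp, norm_gauss])
      (fun i hi hin => by
        refine (hD i hin x).trans ?_
        have h1 : C * (1 + ‖x‖) ^ m ≤ (1 + C) * (1 + ‖x‖) ^ m := by gcongr; linarith
        refine h1.trans (le_self_pow₀ ?_ (by omega))
        have : 1 ≤ (1 + ‖x‖) ^ m := one_le_pow₀ (by linarith [norm_nonneg x])
        nlinarith)
    have hx : 1 + ‖x‖ ≤ 2 * (1 + ‖x‖ ^ 2) := by nlinarith [sq_nonneg (‖x‖ - 1), norm_nonneg x]
    calc _ ≤ (1 + ‖x‖) ^ k * (n.factorial * Real.exp (-b * ‖x‖ ^ 2) *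
          ((1 + C) * (1 + ‖x‖) ^ m) ^ n) := by
          refine mul_le_mul ?_ key (norm_nonneg _) (by positivity)
          gcongr; linarith
      _ = n.factorial * (1 + C) ^ n * ((1 + ‖x‖) ^ (k + m * n) * Real.exp (-b * ‖x‖ ^ 2)) := by
          rw [mul_pow, pow_add, pow_mul]; ring
      _ ≤ n.factorial * (1 + C) ^ n * ((2 * (1 + ‖x‖ ^ 2)) ^ (k + m * n) *
            Real.exp (-b * ‖x‖ ^ 2)) := by gcongr
      _ = n.factorial * (1 + C) ^ n * 2 ^ (k + m * n) *
            ((1 + ‖x‖ ^ 2) ^ (k + m * n) * Real.exp (-b * ‖x‖ ^ 2)) := by rw [mul_pow]; ring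
      _ ≤ _ := by gcongr; exact hKb _ (by positivity)

/-- The Fourier transform of a modulated Gaussian is a translated Gaussian. -/
lemma FTd_gaussS (d : ℕ) (b : ℝ) (hb : 0 < b) (η ξ : Ed d) :
    FTd d (fun x => gaussS d b hb η x) ξ =
      (((π / b) ^ ((d : ℝ) / 2) * Real.exp (-(1 / (4 * b)) * ‖ξ + η‖ ^ 2) : ℝ) : ℂ) := by
  have h := GaussianFourier.integral_cexp_neg_mul_sq_norm_add (V := Ed d) (b := (b : ℂ))
    (by simpa using hb) (-Complex.I) (ξ + η)
  have e : FTd d (fun x => gaussS d b hb η x) ξ =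
      ∫ v : Ed d, Complex.exp (-(b : ℂ) * ((‖v‖ : ℝ) : ℂ) ^ 2 +
        (-Complex.I) * ((⟪ξ + η, v⟫ : ℝ) : ℂ)) := by
    unfold FTd
    congr 1
    funext x
    change _ * Complex.exp _ = _
    rw [← Complex.exp_add, inner_add_left]
    congr 1
    push_cast
    ring
  rw [e, h]
  push_cast
  rw [Complex.ofReal_cpow (by positivity)]
  congr 1
  · simp
  · congr 1
    simp
    ring

lemma integrable_gauss (d : ℕ) (μ : Measure (Ed d)) (hμt : IsTempered d μ) (c : ℝ) (hc : 0 < c)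
    (η : Ed d) : Integrable (fun ξ : Ed d => Real.exp (-c * ‖ξ + η‖ ^ 2)) μ := by
  obtain ⟨k, hk⟩ := hμt
  obtain ⟨K, hK, hKb⟩ := pow_mul_exp_bound c hc k
  have hI : Integrable (fun ξ : Ed d => (1 + ‖ξ‖ ^ 2) ^ (-(k : ℝ))) μ := by
    refine ⟨Measurable.aestronglyMeasurable (by fun_prop), ?_⟩
    rw [hasFiniteIntegral_iff_ofReal (ae_of_all _ fun x => by positivity)]
    exact hk
  refine (hI.const_mul ((2 * (1 + ‖η‖ ^ 2)) ^ k * K)).mono'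
    (Measurable.aestronglyMeasurable (by fun_prop)) (ae_of_all _ fun ξ => ?_)
  rw [Real.norm_of_nonneg (by positivity), Real.rpow_neg (by positivity), Real.rpow_natCast,
    ← div_eq_mul_inv, le_div_iff₀ (by positivity)]
  -- Peetre's inequality: the weight at `ξ` is controlled by the weight at `ξ + η`
  have h1 : 1 + ‖ξ‖ ^ 2 ≤ (2 * (1 + ‖η‖ ^ 2)) * (1 + ‖ξ + η‖ ^ 2) := by
    have : ‖ξ‖ ≤ ‖ξ + η‖ + ‖η‖ := by simpa using norm_sub_le (ξ + η) η
    have h3 : ‖ξ‖ ^ 2 ≤ (‖ξ + η‖ + ‖η‖) ^ 2 := by gcongr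
    nlinarith [sq_nonneg (‖ξ + η‖ - ‖η‖), mul_nonneg (sq_nonneg ‖ξ + η‖) (sq_nonneg ‖η‖)]
  calc _ ≤ Real.exp (-c * ‖ξ + η‖ ^ 2) * ((2 * (1 + ‖η‖ ^ 2)) * (1 + ‖ξ + η‖ ^ 2)) ^ k := by gcongr
    _ = (2 * (1 + ‖η‖ ^ 2)) ^ k * ((1 + ‖ξ + η‖ ^ 2) ^ k * Real.exp (-c * ‖ξ + η‖ ^ 2)) := by
        rw [mul_pow]; ring
    _ ≤ _ := by gcongr; exact hKb _ (by positivity)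

/-- Maximum principle for Gaussians. The Parseval identity turns the left side into
`∫ e^{-iη·x} G(x) f(x) dx` with a Gaussian `G`; as `f ≥ 0`, its modulus is at most the value at
`η = 0`. -/
lemma gauss_shift (d : ℕ) (μ : Measure (Ed d)) (hμt : IsTempered d μ) (f : Ed d → ℝ≥0∞)
    (hP : ParsevalFT d f μ) (c : ℝ) (hc : 0 < c) (η : Ed d) :
    ∫⁻ ξ, ENNReal.ofReal (Real.exp (-c * ‖ξ + η‖ ^ 2)) ∂μ ≤
      ∫⁻ ξ, ENNReal.ofReal (Real.exp (-c * ‖ξ‖ ^ 2)) ∂μ := by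
  have hb : 0 < 1 / (4 * c) := by positivity
  have hcb : 1 / (4 * (1 / (4 * c))) = c := by field_simp
  set b := 1 / (4 * c)
  -- the Parseval identity for the modulated Gaussian of width `b = 1/(4c)`
  have hpar : ∀ η : Ed d, ∫ x, gaussS d b hb η x * (((f x).toReal : ℝ) : ℂ) =
      (((((2 * π) ^ d)⁻¹ * (π / b) ^ ((d : ℝ) / 2)) *
        ∫ ξ, Real.exp (-c * ‖ξ + η‖ ^ 2) ∂μ : ℝ) : ℂ) := by
    intro η
    rw [hP (gaussS d b hb η)]
    simp_rw [FTd_gaussS, hcb]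
    rw [integral_complex_ofReal, integral_const_mul]
    push_cast
    ring
  have hA : 0 < (((2 * π) ^ d)⁻¹ * (π / b) ^ ((d : ℝ) / 2)) := by positivity
  have h0 : ∫ x, Real.exp (-b * ‖x‖ ^ 2) * (f x).toReal =
      (((2 * π) ^ d)⁻¹ * (π / b) ^ ((d : ℝ) / 2)) * ∫ ξ, Real.exp (-c * ‖ξ‖ ^ 2) ∂μ := by
    have := hpar 0
    simp only [add_zero] at this
    rw [← Complex.ofReal_inj, ← this, ← integral_complex_ofReal]
    congr 1
    funext x
    change _ = Complex.exp _ * _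
    push_cast
    congr 2
    simp
  have h1 : (((2 * π) ^ d)⁻¹ * (π / b) ^ ((d : ℝ) / 2)) * ∫ ξ, Real.exp (-c * ‖ξ + η‖ ^ 2) ∂μ ≤
      ∫ x, Real.exp (-b * ‖x‖ ^ 2) * (f x).toReal := by
    have := norm_integral_le_integral_norm (μ := volume)
      (fun x => gaussS d b hb η x * (((f x).toReal : ℝ) : ℂ))
    rw [hpar η, Complex.norm_real] at this
    refine (le_abs_self _).trans (this.trans (le_of_eq ?_))
    congr 1
    funext x
    rw [norm_mul, Complex.norm_real, Real.norm_of_nonneg ENNReal.toReal_nonneg]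
    congr 1
    exact norm_gauss d b η x
  rw [h0] at h1
  have h2 := le_of_mul_le_mul_left h1 hA
  have i0 := integrable_gauss d μ hμt c hc 0
  simp only [add_zero] at i0
  rw [← ofReal_integral_eq_lintegral_ofReal (integrable_gauss d μ hμt c hc η)
      (ae_of_all _ fun x => by positivity),
    ← ofReal_integral_eq_lintegral_ofReal i0 (ae_of_all _ fun x => by positivity)]
  exact ENNReal.ofReal_le_ofReal h2

/-! ### The resolvent kernel -/

/-- The resolvent kernel `2t²/(1 + t²|ξ|²)`, comparable to `min(t², |ξ|⁻²)`. -/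
def gk (d : ℕ) (t : ℝ) (ξ : Ed d) : ℝ := 2 * t ^ 2 / (1 + t ^ 2 * ‖ξ‖ ^ 2)

lemma gk_measurable (d : ℕ) (t : ℝ) : Measurable (gk d t) := by
  unfold gk; fun_prop

/-- The resolvent kernel is a positive mixture of Gaussians. -/
lemma gk_eq (d : ℕ) (t : ℝ) (ξ : Ed d) :
    ENNReal.ofReal (gk d t ξ) = ∫⁻ s in Set.Ioi (0 : ℝ),
      ENNReal.ofReal (2 * t ^ 2 * Real.exp (-s)) *
        ENNReal.ofReal (Real.exp (-(s * t ^ 2) * ‖ξ‖ ^ 2)) := by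
  have ha : 0 < 1 + t ^ 2 * ‖ξ‖ ^ 2 := by positivity
  have e : ∀ s : ℝ, ENNReal.ofReal (2 * t ^ 2 * Real.exp (-s)) *
        ENNReal.ofReal (Real.exp (-(s * t ^ 2) * ‖ξ‖ ^ 2)) =
      ENNReal.ofReal (2 * t ^ 2 * Real.exp (-(1 + t ^ 2 * ‖ξ‖ ^ 2) * s)) := by
    intro s
    rw [← ENNReal.ofReal_mul (by positivity), mul_assoc, ← Real.exp_add]
    ring_nf
  simp_rw [e]
  rw [← ofReal_integral_eq_lintegral_ofReal
    ((integrableOn_exp_mul_Ioi (neg_lt_zero.2 ha) 0).const_mul _)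
    (ae_of_all _ fun x => by positivity), integral_const_mul, integral_exp_mul_Ioi (neg_lt_zero.2 ha)]
  congr 1
  unfold gk
  field_simp
  simp

/-- Maximum principle for the resolvent kernel, by integrating `gauss_shift` over the mixture. -/
lemma gk_shift (d : ℕ) (μ : Measure (Ed d)) [SigmaFinite μ] (hμt : IsTempered d μ)
    (f : Ed d → ℝ≥0∞) (hP : ParsevalFT d f μ) (t : ℝ) (ht : 0 < t) (η : Ed d) :
    ∫⁻ ξ, ENNReal.ofReal (gk d t (ξ + η)) ∂μ ≤ ∫⁻ ξ, ENNReal.ofReal (gk d t ξ) ∂μ := by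
  simp_rw [gk_eq]
  refine (lintegral_lintegral_swap (by fun_prop)).trans_le ?_
  refine le_trans ?_ (lintegral_lintegral_swap (by fun_prop)).ge
  refine setLIntegral_mono' (measurableSet_Ioi (a := (0 : ℝ))) fun s hs => ?_
  rw [lintegral_const_mul _ (by fun_prop), lintegral_const_mul _ (by fun_prop)]
  refine mul_le_mul_right ?_ _
  exact gauss_shift d μ hμt f hP (s * t ^ 2) (mul_pos hs (by positivity)) η

/-! ### Pointwise bound on the wave kernel -/

/-- Since `|sin x| ≤ min(1, |x|)`, the squared wave kernel over a time lag `a ≤ t` is at most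
`min(t², r⁻²)`, and hence at most the resolvent kernel. -/
lemma sinc_sq_le (t a r : ℝ) (ha : 0 ≤ a) (hat : a ≤ t) (hr : 0 ≤ r) :
    _root_.sinc a r ^ 2 ≤ 2 * t ^ 2 / (1 + t ^ 2 * r ^ 2) := by
  have hta : a ^ 2 ≤ t ^ 2 := by gcongr
  rw [le_div_iff₀ (by positivity)]
  unfold _root_.sinc
  split_ifs with h
  · subst h; nlinarith [sq_nonneg t]
  · have hr' : 0 < r := lt_of_le_of_ne hr (Ne.symm h)
    have h1 : Real.sin (a * r) ^ 2 ≤ 1 := Real.sin_sq_le_one _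
    have h2 : Real.sin (a * r) ^ 2 ≤ t ^ 2 * r ^ 2 :=
      (sq_le_sq.2 (Real.abs_sin_le_abs (x := a * r))).trans (by rw [mul_pow]; gcongr)
    rw [div_pow, div_mul_eq_mul_div, div_le_iff₀ (by positivity)]
    nlinarith [mul_nonneg (sub_nonneg.2 h1) (mul_nonneg (sq_nonneg t) (sq_nonneg r))]

/-- The majorant of `Φ_n²` when the times are sorted by `ρ`:
`∏_j gk (ξ_{ρ(1)} + … + ξ_{ρ(j)})`. It depends on the times only through `ρ`. -/
def Gk (d n : ℕ) (t : ℝ) (ρ : Equiv.Perm (Fin n)) (ξ : Fin n → Ed d) : ℝ :=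
  ∏ j : Fin n, gk d t (∑ i ∈ Finset.Iic j, ξ (ρ i))

lemma gk_nonneg (d : ℕ) (t : ℝ) (ξ : Ed d) : 0 ≤ gk d t ξ := by
  unfold gk; positivity

lemma Gk_nonneg (d n : ℕ) (t : ℝ) (ρ : Equiv.Perm (Fin n)) (ξ : Fin n → Ed d) :
    0 ≤ Gk d n t ρ ξ := Finset.prod_nonneg fun _ _ => gk_nonneg _ _ _

lemma Phi_sq_le (d n : ℕ) (t : ℝ) (ts : Fin n → ℝ) (hts : ts ∈ TBox n t) (ξ : Fin n → Ed d) :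
    Phi d n t ts ξ ^ 2 ≤ Gk d n t (Tuple.sort ts) ξ := by
  unfold Phi Gk
  rw [← Finset.prod_pow]
  refine Finset.prod_le_prod (fun _ _ => sq_nonneg _) fun j _ => ?_
  have hb : ∀ i, ts i ∈ Set.Icc 0 t := fun i => hts i (Set.mem_univ i)
  refine sinc_sq_le t _ _ ?_ ?_ (norm_nonneg _)
  · split_ifs with hj
    · exact sub_nonneg.2 (Tuple.monotone_sort ts (Fin.le_def.2 (Nat.le_succ _)))
    · exact sub_nonneg.2 (hb _).2
  · split_ifs with hj
    · linarith [(hb (Tuple.sort ts ⟨j + 1, hj⟩)).2, (hb (Tuple.sort ts j)).1]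
    · linarith [(hb (Tuple.sort ts j)).1]

/-! ### Measurability and product integrals -/

/-- The times sharing a given sorting permutation form a measurable set; this is what makes
Fubini available for functions depending on the times through `Tuple.sort`. -/
lemma measurableSet_sort (n : ℕ) (σ : Equiv.Perm (Fin n)) :
    MeasurableSet ((fun ts : Fin n → ℝ => Tuple.sort ts) ⁻¹' {σ}) := by
  have : (fun ts : Fin n → ℝ => Tuple.sort ts) ⁻¹' {σ} =
      {ts | (∀ i j, i ≤ j → ts (σ i) ≤ ts (σ j)) ∧
        ∀ i j, i < j → ts (σ i) = ts (σ j) → σ i < σ j} := by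
    ext ts
    rw [Set.mem_preimage, Set.mem_singleton_iff, eq_comm, Tuple.eq_sort_iff]
    rfl
  rw [this]
  measurability

lemma measurable_joint {α β ι : Type*} [MeasurableSpace α] [MeasurableSpace β] [Countable ι]
    (S : β → ι) (hS : ∀ i, MeasurableSet (S ⁻¹' {i})) (G : ι → α → ℝ≥0∞)
    (hG : ∀ i, Measurable (G i)) : Measurable fun p : α × β => G (S p.2) p.1 := by
  let _ : MeasurableSpace ι := ⊤
  have h : Measurable fun q : α × ι => G q.2 q.1 := measurable_from_prod_countable_left hG
  exact h.comp (measurable_fst.prodMk ((measurable_to_countable' hS).comp measurable_snd))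

/-- Tonelli's theorem splitting off the first coordinate of a finite product. -/
lemma lintegral_pi_succ {α : Type*} [MeasurableSpace α] (n : ℕ) (ν : Fin (n + 1) → Measure α)
    [∀ i, SigmaFinite (ν i)] (F : (Fin (n + 1) → α) → ℝ≥0∞) (hF : Measurable F) :
    ∫⁻ x, F x ∂Measure.pi ν =
      ∫⁻ a, ∫⁻ y, F (Fin.cons a y) ∂(Measure.pi fun i : Fin n => ν i.succ) ∂(ν 0) := by
  have h := (measurePreserving_piFinSuccAbove ν 0).symm
  rw [← h.lintegral_comp hF, lintegral_prod _ (by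
    exact (hF.comp (MeasurableEquiv.measurable _)).aemeasurable)]
  simp [MeasurableEquiv.piFinSuccAbove_symm_apply, Fin.insertNthEquiv]

lemma lintegral_pi_prod {α : Type*} [MeasurableSpace α] (n : ℕ) (ν : Fin n → Measure α)
    [∀ i, SigmaFinite (ν i)] (g : Fin n → α → ℝ≥0∞) (hg : ∀ i, Measurable (g i)) :
    ∫⁻ x, ∏ i, g i (x i) ∂Measure.pi ν = ∏ i, ∫⁻ a, g i a ∂(ν i) := by
  induction n with
  | zero => simp
  | succ n ih =>
    rw [lintegral_pi_succ _ _ _ (by fun_prop), Fin.prod_univ_succ]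
    simp_rw [Fin.prod_univ_succ, Fin.cons_zero, Fin.cons_succ]
    rw [← ih (fun i => ν i.succ) (fun i => g i.succ) fun i => hg _,
      ← lintegral_mul_const _ (hg 0)]
    refine lintegral_congr fun a => ?_
    rw [lintegral_const_mul _ (by fun_prop)]

/-- Chain of partial sums: a bound on
`∫ g(ξ + η) μ(dξ)` uniform in the shift `η` gives a bound on the whole chain. The extra
shift `η` carries the partial sum of the variables already fixed. -/
lemma chain_bound (d : ℕ) (μ : Measure (Ed d)) [SigmaFinite μ] (g : Ed d → ℝ≥0∞)
    (hg : Measurable g) (M : ℝ≥0∞) (hM : ∀ η, ∫⁻ ξ, g (ξ + η) ∂μ ≤ M) (n : ℕ) (η : Ed d) :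
    ∫⁻ ξ : Fin n → Ed d, ∏ j : Fin n, g ((∑ i ∈ Finset.Iic j, ξ i) + η)
      ∂(Measure.pi fun _ => μ) ≤ M ^ n := by
  induction n generalizing η with
  | zero => simp
  | succ n ih =>
    rw [lintegral_pi_succ _ _ _ (by fun_prop)]
    have e : ∀ (a : Ed d) (y : Fin n → Ed d),
        ∏ j : Fin (n + 1), g ((∑ i ∈ Finset.Iic j, (Fin.cons a y : Fin (n + 1) → Ed d) i) + η) =
        g (a + η) * ∏ j : Fin n, g ((∑ i ∈ Finset.Iic j, y i) + (a + η)) := by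
      intro a y
      rw [Fin.prod_univ_succ]
      congr 1
      · congr 2
        rw [show Finset.Iic (0 : Fin (n + 1)) = {0} from by ext i; simp]
        simp
      · refine Finset.prod_congr rfl fun j _ => ?_
        congr 1
        have : Finset.Iic j.succ = insert 0 ((Finset.Iic j).map (Fin.succEmb n)) := by
          ext i
          refine Fin.cases ?_ (fun i => ?_) i <;> simp
        rw [this, Finset.sum_insert (by simp), Finset.sum_map]
        simp only [Fin.cons_zero, Fin.coe_succEmb, Fin.cons_succ]
        abel
    simp_rw [e]
    calc _ ≤ ∫⁻ a, g (a + η) * M ^ n ∂μ := by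
          refine lintegral_mono fun a => ?_
          rw [lintegral_const_mul _ (by fun_prop)]
          gcongr
          exact ih _
      _ ≤ _ := by
          rw [lintegral_mul_const _ (by fun_prop), pow_succ']
          gcongr
          exact hM η

lemma Gk_bound (d n : ℕ) (μ : Measure (Ed d)) [SigmaFinite μ] (t : ℝ) (M : ℝ≥0∞)
    (hM : ∀ η, ∫⁻ ξ, ENNReal.ofReal (gk d t (ξ + η)) ∂μ ≤ M) (ρ : Equiv.Perm (Fin n)) :
    ∫⁻ ξ, ENNReal.ofReal (Gk d n t ρ ξ) ∂(Measure.pi fun _ : Fin n => μ) ≤ M ^ n := by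
  have hm := gk_measurable d t
  have h := chain_bound d μ (fun x => ENNReal.ofReal (gk d t x)) (by fun_prop) M hM n 0
  -- relabelling the variables by `ρ` preserves the product measure
  have hp := (measurePreserving_piCongrLeft (fun _ : Fin n => μ) ρ)
  rw [← hp.lintegral_comp_emb (MeasurableEquiv.measurableEmbedding _)]
  refine le_trans (le_of_eq ?_) h
  refine lintegral_congr fun ξ => ?_
  unfold Gk
  rw [ENNReal.ofReal_prod_of_nonneg fun _ _ => gk_nonneg _ _ _]
  refine Finset.prod_congr rfl fun j _ => ?_
  rw [add_zero]
  congr 2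
  refine Finset.sum_congr rfl fun i _ => ?_
  rw [MeasurableEquiv.coe_piCongrLeft, Equiv.piCongrLeft_apply_apply]

lemma Gk_joint_measurable (d n : ℕ) (t : ℝ) :
    Measurable fun p : (Fin n → Ed d) × (Fin n → ℝ) =>
      ENNReal.ofReal (Gk d n t (Tuple.sort p.2) p.1) := by
  have hm := gk_measurable d t
  refine measurable_joint (fun ts : Fin n → ℝ => Tuple.sort ts) (measurableSet_sort n)
    (fun ρ ξ => ENNReal.ofReal (Gk d n t ρ ξ)) fun ρ => ?_
  have h : Measurable (Gk d n t ρ) := by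
    unfold Gk
    refine Finset.measurable_prod _ fun j _ => hm.comp ?_
    exact Finset.measurable_sum _ fun i _ => measurable_pi_apply (ρ i)
  exact h.ennreal_ofReal

/-! ### Time integrals against `γ` -/

/-- For `a ∈ [0,t]`, the window `[a-t, a]` lies in `[-t, t]`, over which `γ` has integral
`2 ∫₀ᵗ γ` by symmetry. -/
lemma gamma_slice (γ : ℝ → ℝ≥0∞) (hγm : Measurable γ) (hγsym : ∀ s : ℝ, γ (-s) = γ s)
    (t a : ℝ) (ha : a ∈ Set.Icc 0 t) :
    ∫⁻ s in Set.Icc 0 t, γ (a - s) ≤ 2 * ∫⁻ s in Set.Icc (0 : ℝ) t, γ s := by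
  have h1 : ∫⁻ s in Set.Icc 0 t, γ (a - s) = ∫⁻ s in Set.Icc (a - t) a, γ s := by
    have hp : MeasurePreserving (fun s : ℝ => a - s) volume volume :=
      Measure.measurePreserving_sub_left volume a
    have := hp.setLIntegral_comp_preimage (s := Set.Icc (a - t) a) measurableSet_Icc hγm
    rw [← this]
    congr 2
    ext s
    simp only [Set.mem_preimage, Set.mem_Icc]
    constructor <;> rintro ⟨h, h'⟩ <;> constructor <;> linarith
  have h2 : ∫⁻ s in Set.Icc (-t) 0, γ s = ∫⁻ s in Set.Icc 0 t, γ s := by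
    have := (Measure.measurePreserving_neg (volume : Measure ℝ)).setLIntegral_comp_preimage
      (s := Set.Icc (-t) 0) measurableSet_Icc hγm
    rw [← this]
    simp [hγsym]
  rw [h1, two_mul]
  nth_rw 1 [← h2]
  refine (lintegral_mono_set fun s hs => ?_).trans (lintegral_union_le _ _ _)
  rcases le_total s 0 with h | h
  · exact Or.inl ⟨by linarith [hs.1, ha.1], h⟩
  · exact Or.inr ⟨h, hs.2.trans ha.2⟩

lemma restrict_TBox (n : ℕ) (t : ℝ) : (volume : Measure (Fin n → ℝ)).restrict (TBox n t) =
    Measure.pi fun _ => (volume : Measure ℝ).restrict (Set.Icc 0 t) := by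
  unfold TBox
  rw [volume_pi, Measure.restrict_pi_pi]

lemma measurableSet_TBox (n : ℕ) (t : ℝ) : MeasurableSet (TBox n t) :=
  MeasurableSet.univ_pi fun _ => measurableSet_Icc

lemma weight_bound (n : ℕ) (γ : ℝ → ℝ≥0∞) (hγm : Measurable γ) (hγsym : ∀ s : ℝ, γ (-s) = γ s)
    (t : ℝ) (ts : Fin n → ℝ) (hts : ts ∈ TBox n t) :
    ∫⁻ ss in TBox n t, ∏ j, γ (ts j - ss j) ≤ (2 * ∫⁻ s in Set.Icc (0 : ℝ) t, γ s) ^ n := by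
  rw [restrict_TBox, lintegral_pi_prod n _ (fun j s => γ (ts j - s)) (fun j => by fun_prop)]
  refine (Finset.prod_le_prod' fun j _ =>
    gamma_slice γ hγm hγsym t (ts j) (hts j (Set.mem_univ j))).trans (by simp)

/-- A symmetrised function of the two time vectors integrates against `∏_j γ(t_j - s_j)` to at
most `2 Γ_t^n` times the integral of one of its two terms. -/
lemma time_bound (n : ℕ) (γ : ℝ → ℝ≥0∞) (hγm : Measurable γ) (hγsym : ∀ s : ℝ, γ (-s) = γ s)
    (t : ℝ) (A : (Fin n → ℝ) → ℝ≥0∞) (hA : Measurable A) :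
    ∫⁻ ts in TBox n t, ∫⁻ ss in TBox n t, (∏ j, γ (ts j - ss j)) * (A ts + A ss) ≤
      2 * (2 * ∫⁻ s in Set.Icc (0 : ℝ) t, γ s) ^ n * ∫⁻ ts in TBox n t, A ts := by
  set Γ := (2 * ∫⁻ s in Set.Icc (0 : ℝ) t, γ s) ^ n
  have h1 : ∫⁻ ts in TBox n t, ∫⁻ ss in TBox n t, (∏ j, γ (ts j - ss j)) * A ts ≤
      Γ * ∫⁻ ts in TBox n t, A ts := by
    rw [← lintegral_const_mul _ hA]
    refine setLIntegral_mono' (measurableSet_TBox n t) fun ts hts => ?_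
    rw [lintegral_mul_const _ (by fun_prop)]
    gcongr
    exact weight_bound n γ hγm hγsym t ts hts
  have h2 : ∫⁻ ts in TBox n t, ∫⁻ ss in TBox n t, (∏ j, γ (ts j - ss j)) * A ss ≤
      Γ * ∫⁻ ts in TBox n t, A ts := by
    -- exchanging the roles of `ts` and `ss` reduces this to `h1`, as `γ` is even
    refine (lintegral_lintegral_swap (by fun_prop)).trans_le (le_trans (le_of_eq ?_) h1)
    refine lintegral_congr fun ss => lintegral_congr fun ts => ?_
    congr 1
    refine Finset.prod_congr rfl fun j _ => ?_
    rw [← hγsym, neg_sub]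
  simp_rw [mul_add]
  calc _ = ∫⁻ ts in TBox n t, ((∫⁻ ss in TBox n t, (∏ j, γ (ts j - ss j)) * A ts) +
        ∫⁻ ss in TBox n t, (∏ j, γ (ts j - ss j)) * A ss) := by
        refine lintegral_congr fun ts => ?_
        rw [lintegral_add_left (by fun_prop)]
    _ = (∫⁻ ts in TBox n t, ∫⁻ ss in TBox n t, (∏ j, γ (ts j - ss j)) * A ts) +
        ∫⁻ ts in TBox n t, ∫⁻ ss in TBox n t, (∏ j, γ (ts j - ss j)) * A ss := by
        rw [lintegral_add_left]
        exact Measurable.lintegral_prod_right' (f := fun p : (Fin n → ℝ) × (Fin n → ℝ) =>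
          (∏ j, γ (p.1 j - p.2 j)) * A p.1) (by fun_prop)
    _ ≤ Γ * (∫⁻ ts in TBox n t, A ts) + Γ * ∫⁻ ts in TBox n t, A ts := add_le_add h1 h2
    _ = _ := by ring

/-- `|Φ(𝐭) Φ(𝐬)| ≤ (Φ(𝐭)² + Φ(𝐬)²)/2`, which decouples the two time vectors. The truncation
`∞ ↦ 0` in `ENNReal.toReal` only decreases the weight. -/
lemma integrand_bound (d n : ℕ) (γ : ℝ → ℝ≥0∞) (t : ℝ) (ts ss : Fin n → ℝ)
    (hts : ts ∈ TBox n t) (hss : ss ∈ TBox n t) (ξ : Fin n → Ed d) :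
    ‖(∏ j : Fin n, (γ (ts j - ss j)).toReal) * (Phi d n t ts ξ * Phi d n t ss ξ)‖ₑ ≤
      (∏ j, γ (ts j - ss j)) * (ENNReal.ofReal (Gk d n t (Tuple.sort ts) ξ) / 2 +
        ENNReal.ofReal (Gk d n t (Tuple.sort ss) ξ) / 2) := by
  rw [enorm_mul]
  refine mul_le_mul' ?_ ?_
  · rw [← ENNReal.toReal_prod, Real.enorm_of_nonneg ENNReal.toReal_nonneg]
    exact ENNReal.ofReal_toReal_le
  · rw [← ofReal_norm, ← ENNReal.add_div, ← ENNReal.ofReal_add (Gk_nonneg _ _ _ _ _)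
      (Gk_nonneg _ _ _ _ _), ← ENNReal.ofReal_ofNat 2, ← ENNReal.ofReal_div_of_pos two_pos]
    refine ENNReal.ofReal_le_ofReal ?_
    have h1 := Phi_sq_le d n t ts hts ξ
    have h2 := Phi_sq_le d n t ss hss ξ
    rw [norm_mul, Real.norm_eq_abs, Real.norm_eq_abs]
    nlinarith [sq_nonneg (|Phi d n t ts ξ| - |Phi d n t ss ξ|), sq_abs (Phi d n t ts ξ),
      sq_abs (Phi d n t ss ξ)]

/-- The time and frequency integrals combined: after the symmetrised time bound, Fubini lets the
frequency integral be estimated for fixed times, leaving the volume `t^n` of the box. -/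
lemma spacetime_bound {α : Type*} [MeasurableSpace α] (ν : Measure α) [SFinite ν] (n : ℕ)
    (γ : ℝ → ℝ≥0∞) (hγm : Measurable γ) (hγsym : ∀ s : ℝ, γ (-s) = γ s) (t : ℝ)
    (A : α → (Fin n → ℝ) → ℝ≥0∞) (hA : Measurable (Function.uncurry A)) (K : ℝ≥0∞)
    (hK : ∀ ts, ∫⁻ ξ, A ξ ts ∂ν ≤ K) :
    ∫⁻ ξ, (∫⁻ ts in TBox n t, ∫⁻ ss in TBox n t,
        (∏ j, γ (ts j - ss j)) * (A ξ ts / 2 + A ξ ss / 2)) ∂ν ≤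
      (2 * ∫⁻ s in Set.Icc (0 : ℝ) t, γ s) ^ n * (K * ENNReal.ofReal t ^ n) := by
  set Γ := (2 * ∫⁻ s in Set.Icc (0 : ℝ) t, γ s) ^ n
  have hA' : ∀ ξ, Measurable (A ξ) := fun ξ => hA.comp measurable_prodMk_left
  calc _ ≤ ∫⁻ ξ, (Γ * ∫⁻ ts in TBox n t, A ξ ts) ∂ν := by
        refine lintegral_mono fun ξ => ?_
        refine (time_bound n γ hγm hγsym t (fun ts => A ξ ts / 2)
          ((hA' ξ).div_const 2)).trans (le_of_eq ?_)
        simp_rw [div_eq_mul_inv]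
        rw [lintegral_mul_const _ (hA' ξ), mul_comm 2, mul_assoc]
        congr 1
        rw [mul_comm, mul_assoc, ENNReal.inv_mul_cancel (by simp) (by simp), mul_one]
    _ = Γ * ∫⁻ ts in TBox n t, ∫⁻ ξ, A ξ ts ∂ν := by
        have hm : Measurable fun ξ => ∫⁻ ts in TBox n t, A ξ ts :=
          Measurable.lintegral_prod_right' (f := Function.uncurry A) hA
        rw [lintegral_const_mul _ hm]
        congr 1
        exact lintegral_lintegral_swap hA.aemeasurable
    _ ≤ Γ * ∫⁻ ts in TBox n t, K := by
        refine mul_le_mul_right (lintegral_mono fun ts => hK ts) _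
    _ = _ := by
        rw [setLIntegral_const]
        congr 2
        rw [TBox, volume_pi, Measure.pi_pi]
        simp

lemma alpha_enorm_bound (d n : ℕ) (γ : ℝ → ℝ≥0∞) (hγm : Measurable γ)
    (hγsym : ∀ s : ℝ, γ (-s) = γ s) (μ : Measure (Ed d)) [SigmaFinite μ] (t : ℝ) (M : ℝ≥0∞)
    (hM : ∀ η, ∫⁻ ξ, ENNReal.ofReal (gk d t (ξ + η)) ∂μ ≤ M) :
    ‖∫ ξ : Fin n → Ed d,
      (∫ ts in TBox n t, ∫ ss in TBox n t,
        (∏ j : Fin n, (γ (ts j - ss j)).toReal) * (Phi d n t ts ξ * Phi d n t ss ξ))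
      ∂(Measure.pi fun _ : Fin n => μ)‖ₑ ≤
    (2 * ∫⁻ s in Set.Icc (0 : ℝ) t, γ s) ^ n * (M ^ n * ENNReal.ofReal t ^ n) := by
  refine le_trans ?_ (spacetime_bound (Measure.pi fun _ : Fin n => μ) n γ hγm hγsym t
    (fun ξ ts => ENNReal.ofReal (Gk d n t (Tuple.sort ts) ξ)) (Gk_joint_measurable d n t)
    (M ^ n) fun ts => Gk_bound d n μ t M hM _)
  refine (enorm_integral_le_lintegral_enorm _).trans (lintegral_mono fun ξ => ?_)
  refine (enorm_integral_le_lintegral_enorm _).trans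
    (setLIntegral_mono' (measurableSet_TBox n t) fun ts hts => ?_)
  refine (enorm_integral_le_lintegral_enorm _).trans
    (setLIntegral_mono' (measurableSet_TBox n t) fun ss hss => ?_)
  exact integrand_bound d n γ t ts ss hts hss ξ

/-! ### Constants -/

/-- A tempered measure is finite on balls. -/
lemma locFin (d : ℕ) (μ : Measure (Ed d)) (hμt : IsTempered d μ) (R : ℝ) :
    μ {ξ : Ed d | ‖ξ‖ ≤ R} < ⊤ := by
  have hI := (integrable_gauss d μ hμt 1 one_pos 0)
  simp only [add_zero] at hI
  have := hI.measure_ge_lt_top (ε := Real.exp (-1 * R ^ 2)) (Real.exp_pos _)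
  refine (measure_mono fun ξ (hξ : ‖ξ‖ ≤ R) => ?_).trans_lt this
  change Real.exp (-1 * R ^ 2) ≤ Real.exp (-1 * ‖ξ‖ ^ 2)
  have h : ‖ξ‖ ^ 2 ≤ R ^ 2 := by gcongr
  exact Real.exp_le_exp.2 (by linarith)

lemma C_lt_top (d : ℕ) (μ : Measure (Ed d)) (hμt : IsTempered d μ)
    (hint : ∫⁻ ξ in {ξ : Ed d | 1 < ‖ξ‖}, ENNReal.ofReal (1 / ‖ξ‖ ^ 2) ∂μ < ⊤) (N : ℝ)
    (hN : 0 < N) : ∫⁻ ξ in {ξ : Ed d | N < ‖ξ‖}, ENNReal.ofReal (1 / ‖ξ‖ ^ 2) ∂μ < ⊤ := by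
  have hsub : {ξ : Ed d | N < ‖ξ‖} ⊆ {ξ | 1 < ‖ξ‖} ∪ {ξ | N < ‖ξ‖ ∧ ‖ξ‖ ≤ 1} := by
    intro ξ hξ
    rcases lt_or_ge 1 ‖ξ‖ with h | h
    · exact Or.inl h
    · exact Or.inr ⟨hξ, h⟩
  refine ((lintegral_mono_set hsub).trans (lintegral_union_le _ _ _)).trans_lt
    (ENNReal.add_lt_top.2 ⟨hint, ?_⟩)
  have hms : MeasurableSet {ξ : Ed d | N < ‖ξ‖ ∧ ‖ξ‖ ≤ 1} := by measurability
  calc _ ≤ ∫⁻ ξ in {ξ : Ed d | N < ‖ξ‖ ∧ ‖ξ‖ ≤ 1}, ENNReal.ofReal (1 / N ^ 2) ∂μ := by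
        refine setLIntegral_mono' hms fun ξ hξ => ?_
        have := hξ.1.le
        gcongr
    _ < ⊤ := by
        rw [setLIntegral_const]
        exact ENNReal.mul_lt_top ENNReal.ofReal_lt_top
          ((measure_mono fun ξ hξ => hξ.2).trans_lt (locFin d μ hμt 1))

/-- Splitting at `|ξ| = N`: `gk ≤ 2t²` on the ball and `gk ≤ 2 |ξ|⁻²` outside. -/
lemma gk_total (d : ℕ) (μ : Measure (Ed d)) (t N : ℝ) (ht : 0 < t) (hN : 0 < N) :
    ∫⁻ ξ, ENNReal.ofReal (gk d t ξ) ∂μ ≤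
      2 * (ENNReal.ofReal (t ^ 2) * μ {ξ : Ed d | ‖ξ‖ ≤ N} +
        ∫⁻ ξ in {ξ : Ed d | N < ‖ξ‖}, ENNReal.ofReal (1 / ‖ξ‖ ^ 2) ∂μ) := by
  have hms : MeasurableSet {ξ : Ed d | ‖ξ‖ ≤ N} := by measurability
  have hms' : MeasurableSet {ξ : Ed d | N < ‖ξ‖} := by measurability
  have hc : {ξ : Ed d | ‖ξ‖ ≤ N}ᶜ = {ξ | N < ‖ξ‖} := by ext; simp
  rw [← lintegral_add_compl _ hms, hc, mul_add]
  refine add_le_add ?_ ?_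
  · rw [← mul_assoc, ← setLIntegral_const]
    refine lintegral_mono fun ξ => ?_
    rw [show (2 : ℝ≥0∞) = ENNReal.ofReal 2 by simp, ← ENNReal.ofReal_mul two_pos.le]
    refine ENNReal.ofReal_le_ofReal (div_le_self (by positivity) ?_)
    nlinarith [mul_nonneg (sq_nonneg t) (sq_nonneg ‖ξ‖)]
  · rw [← lintegral_const_mul _ (by fun_prop)]
    refine setLIntegral_mono' hms' fun ξ hξ => ?_
    have hξ' : 0 < ‖ξ‖ := hN.trans hξ
    have h2 : (2 : ℝ≥0∞) * ENNReal.ofReal (1 / ‖ξ‖ ^ 2) = ENNReal.ofReal (2 * (1 / ‖ξ‖ ^ 2)) := by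
      rw [ENNReal.ofReal_mul two_pos.le, ENNReal.ofReal_ofNat]
    rw [h2]
    refine ENNReal.ofReal_le_ofReal ?_
    unfold gk
    rw [div_le_iff₀ (by positivity)]
    field_simp
    linarith

/-- Binomial theorem with `C(n,k) ≤ 2^n` and `n!/k! ≥ 1`. -/
lemma final_ineq (n : ℕ) (t D C : ℝ) (ht : 0 < t) (hD : 0 ≤ D) (hC : 0 ≤ C) :
    (2 * (t ^ 2 * D + C)) ^ n * t ^ n ≤ (n.factorial : ℝ) * 8 ^ n *
      ∑ k ∈ Finset.range (n + 1), t ^ (n + 2 * k) / (k.factorial : ℝ) * D ^ k * C ^ (n - k) := by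
  rw [mul_pow, add_pow, Finset.mul_sum, Finset.sum_mul, Finset.mul_sum]
  refine Finset.sum_le_sum fun k hk => ?_
  have hk' : k ≤ n := by simpa [Nat.lt_succ_iff] using hk
  have h1 : (n.choose k : ℝ) ≤ 2 ^ n := by exact_mod_cast Nat.choose_le_two_pow n k
  have h2 : (k.factorial : ℝ) ≤ n.factorial := by exact_mod_cast Nat.factorial_le hk'
  have h3 : (1 : ℝ) ≤ n.factorial / k.factorial := by
    rwa [one_le_div (by positivity)]
  have h4 : (2 : ℝ) ^ n * 2 ^ n ≤ 8 ^ n := by rw [← mul_pow]; gcongr; norm_num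
  calc _ = (2 ^ n * n.choose k) * (t ^ (n + 2 * k) * D ^ k * C ^ (n - k)) := by
        rw [mul_pow, pow_add, pow_mul]; ring
    _ ≤ 8 ^ n * (t ^ (n + 2 * k) * D ^ k * C ^ (n - k)) := by
        gcongr
        exact (mul_le_mul_of_nonneg_left h1 (by positivity)).trans h4
    _ ≤ (n.factorial / k.factorial) * (8 ^ n * (t ^ (n + 2 * k) * D ^ k * C ^ (n - k))) :=
        le_mul_of_one_le_left (by positivity) h3
    _ = _ := by ring

/-- For every `N > 0`,
`α_n(t) ≤ Γ_t^n · n! · (2π)^{-nd} · 8^n · ∑_{k=0}^n (t^{n+2k}/k!) D_N^k C_N^{n−k}`,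
where `Γ_t = 2∫₀ᵗ γ`, `C_N = ∫_{|ξ|>N} |ξ|^{-2} μ(dξ)` and `D_N = μ{|ξ| ≤ N}`. -/
theorem stmt10 (d : ℕ) (γ : ℝ → ℝ≥0∞) (hγm : Measurable γ)
    (hγsym : ∀ s : ℝ, γ (-s) = γ s) (hγloc : LocIntENN1 γ)
    (μ : Measure (Ed d)) (hμt : IsTempered d μ)
    (f : Ed d → ℝ≥0∞) (hfm : Measurable f) (hfloc : LocIntENN d f)
    (hffin : ∀ x : Ed d, x ≠ 0 → f x < ⊤) (hP : ParsevalFT d f μ)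
    (hint : ∫⁻ ξ in {ξ : Ed d | 1 < ‖ξ‖}, ENNReal.ofReal (1 / ‖ξ‖ ^ 2) ∂μ < ⊤)
    (t : ℝ) (ht : 0 < t) (n : ℕ) (hn : 1 ≤ n) (N : ℝ) (hN : 0 < N) :
    alphaHAM d n γ μ t ≤
      ((2 * ∫⁻ s in Set.Icc (0 : ℝ) t, γ s).toReal) ^ n * (n.factorial : ℝ) *
        ((2 * π) ^ (n * d))⁻¹ * 8 ^ n *
        ∑ k ∈ Finset.range (n + 1),
          t ^ (n + 2 * k) / (k.factorial : ℝ) *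
            ((μ {ξ : Ed d | ‖ξ‖ ≤ N}).toReal) ^ k *
            ((∫⁻ ξ in {ξ : Ed d | N < ‖ξ‖}, ENNReal.ofReal (1 / ‖ξ‖ ^ 2) ∂μ).toReal) ^
              (n - k) := by
  have hfin : ∀ R : ℝ, μ {ξ : Ed d | ‖ξ‖ ≤ R} < ⊤ := locFin d μ hμt
  have : IsLocallyFiniteMeasure μ := ⟨fun x => ⟨Metric.closedBall 0 (‖x‖ + 1),
    Metric.closedBall_mem_nhds_of_mem (by simp), by
      simpa [Metric.closedBall] using hfin (‖x‖ + 1)⟩⟩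
  have hD := hfin N
  have hC := C_lt_top d μ hμt hint N hN
  have hΓ : 2 * ∫⁻ s in Set.Icc (0 : ℝ) t, γ s < ⊤ :=
    ENNReal.mul_lt_top (by simp) (hγloc _ isCompact_Icc)
  have hb := alpha_enorm_bound d n γ hγm hγsym μ t _ fun η =>
    (gk_shift d μ hμt f hP t ht η).trans (gk_total d μ t N ht hN)
  set D := μ {ξ : Ed d | ‖ξ‖ ≤ N}
  set C := ∫⁻ ξ in {ξ : Ed d | N < ‖ξ‖}, ENNReal.ofReal (1 / ‖ξ‖ ^ 2) ∂μ
  set Γ := 2 * ∫⁻ s in Set.Icc (0 : ℝ) t, γ s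
  have hM : 2 * (ENNReal.ofReal (t ^ 2) * D + C) < ⊤ :=
    ENNReal.mul_lt_top (by simp) (ENNReal.add_lt_top.2
      ⟨ENNReal.mul_lt_top ENNReal.ofReal_lt_top hD, hC⟩)
  have hr := ENNReal.toReal_mono (ENNReal.mul_lt_top (ENNReal.pow_lt_top hΓ)
    (ENNReal.mul_lt_top (ENNReal.pow_lt_top hM) (ENNReal.pow_lt_top ENNReal.ofReal_lt_top))).ne hb
  have hMr : (2 * (ENNReal.ofReal (t ^ 2) * D + C)).toReal =
      2 * (t ^ 2 * D.toReal + C.toReal) := by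
    rw [ENNReal.toReal_mul, ENNReal.toReal_add (ENNReal.mul_lt_top ENNReal.ofReal_lt_top hD).ne
      hC.ne, ENNReal.toReal_mul, ENNReal.toReal_ofReal (by positivity), ENNReal.toReal_ofNat]
  rw [toReal_enorm, ENNReal.toReal_mul (a := Γ ^ n), ENNReal.toReal_mul, ENNReal.toReal_pow,
    ENNReal.toReal_pow, ENNReal.toReal_pow, hMr, ENNReal.toReal_ofReal ht.le] at hr
  have hf := final_ineq n t D.toReal C.toReal ht ENNReal.toReal_nonneg ENNReal.toReal_nonneg
  unfold alphaHAM
  calc _ ≤ ((2 * π) ^ (n * d))⁻¹ *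
        (Γ.toReal ^ n * ((2 * (t ^ 2 * D.toReal + C.toReal)) ^ n * t ^ n)) := by
        gcongr
        exact (le_abs_self _).trans hr
    _ ≤ ((2 * π) ^ (n * d))⁻¹ * (Γ.toReal ^ n * ((n.factorial : ℝ) * 8 ^ n *
      ∑ k ∈ Finset.range (n + 1),
        t ^ (n + 2 * k) / (k.factorial : ℝ) * D.toReal ^ k * C.toReal ^ (n - k))) := by
        gcongr
    _ = _ := by ring
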